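/- (Primal Γ4 identity from the proof of Lemma 2.) Let b : [0,1] → ℝ be continuously differentiable, P1, P2 : [0,1]² → ℝ continuously differentiable with P1(x,ξ) = P2(ξ,x) for all x, ξ, and w : [0,1] → ℝ continuously differentiable. Then ∫₀¹ w'(x)·b(x)·[∫₀^x P1(x,ξ)w(ξ)dξ + ∫_x^1 P2(x,ξ)w(ξ)dξ] dx = −(1/2)∫₀¹∫₀^x w(x)·[∂/∂x(b(x)P1(x,ξ)) + ∂/∂ξ(b(ξ)P1(x,ξ))]·w(ξ) dξ dx − (1/2)∫₀¹∫_x^1 w(x)·[∂/∂x(b(x)P2(x,ξ)) + ∂/∂ξ(b(ξ)P2(x,ξ))]·w(ξ) dξ dx + w(1)·∫₀¹ b(1)·P1(1,ξ)·w(ξ) dξ − w(0)·∫₀¹ b(0)·P2(0,ξ)·w(ξ) dξ. -/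

import Mathlib

open MeasureTheory

lemma tri_swap (f : ℝ → ℝ → ℝ) (hf : Continuous (fun p : ℝ × ℝ => f p.1 p.2)) :
    (∫ x in (0:ℝ)..1, ∫ y in (0:ℝ)..x, f x y) = ∫ y in (0:ℝ)..1, ∫ x in y..(1:ℝ), f x y := by
  have hS : MeasurableSet {p : ℝ × ℝ | p.2 < p.1} := measurableSet_lt measurable_snd measurable_fst
  let F : ℝ → ℝ → ℝ := fun x y => if y < x then f x y else 0
  have hF : Function.uncurry F = Set.indicator {p : ℝ × ℝ | p.2 < p.1} (fun p => f p.1 p.2) := by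
    ext ⟨x, y⟩
    simp [F, Set.indicator, Function.uncurry]
  have hi : IntegrableOn (Function.uncurry F) (Set.uIoc (0:ℝ) 1 ×ˢ Set.uIoc (0:ℝ) 1) := by
    rw [hF]
    refine IntegrableOn.indicator ?_ hS
    refine IntegrableOn.mono_set (t := Set.Icc (0:ℝ) 1 ×ˢ Set.Icc (0:ℝ) 1) ?_ ?_
    · exact hf.continuousOn.integrableOn_compact (isCompact_Icc.prod isCompact_Icc)
    · rw [Set.uIoc_of_le zero_le_one]
      exact Set.prod_mono Set.Ioc_subset_Icc_self Set.Ioc_subset_Icc_self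
  have key := intervalIntegral_intervalIntegral_swap hi
  have e1 : (∫ x in (0:ℝ)..1, ∫ y in (0:ℝ)..1, F x y)
      = ∫ x in (0:ℝ)..1, ∫ y in (0:ℝ)..x, f x y := by
    refine intervalIntegral.integral_congr fun x hx => ?_
    rw [Set.uIcc_of_le zero_le_one] at hx
    have : (fun y => F x y) = Set.indicator (Set.Iio x) (fun y => f x y) := by
      ext y; simp [F, Set.indicator]
    simp only [this]
    rw [intervalIntegral.integral_of_le zero_le_one, intervalIntegral.integral_of_le hx.1,
      setIntegral_indicator measurableSet_Iio, integral_Ioc_eq_integral_Ioo]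
    congr 2
    ext y
    simp only [Set.mem_inter_iff, Set.mem_Ioc, Set.mem_Iio, Set.mem_Ioo]
    exact ⟨fun h => ⟨h.1.1, h.2⟩, fun h => ⟨⟨h.1, h.2.le.trans hx.2⟩, h.2⟩⟩
  have e2 : (∫ y in (0:ℝ)..1, ∫ x in (0:ℝ)..1, F x y)
      = ∫ y in (0:ℝ)..1, ∫ x in y..(1:ℝ), f x y := by
    refine intervalIntegral.integral_congr fun y hy => ?_
    rw [Set.uIcc_of_le zero_le_one] at hy
    have : (fun x => F x y) = Set.indicator (Set.Ioi y) (fun x => f x y) := by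
      ext x; simp [F, Set.indicator]
    simp only [this]
    rw [intervalIntegral.integral_of_le zero_le_one, intervalIntegral.integral_of_le hy.2,
      setIntegral_indicator measurableSet_Ioi]
    congr 2
    ext x
    simp only [Set.mem_inter_iff, Set.mem_Ioc, Set.mem_Ioi]
    exact ⟨fun h => ⟨h.2, h.1.2⟩, fun h => ⟨⟨hy.1.trans_lt h.1, h.2⟩, h.1⟩⟩
  rw [← e1, ← e2, key]

lemma cont_lower (f : ℝ → ℝ → ℝ) (hf : Continuous (fun p : ℝ × ℝ => f p.1 p.2)) :
    Continuous fun x => ∫ y in (0:ℝ)..x, f x y :=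
  intervalIntegral.continuous_parametric_intervalIntegral_of_continuous (f := f) hf continuous_id

lemma cont_upper (f : ℝ → ℝ → ℝ) (hf : Continuous (fun p : ℝ × ℝ => f p.1 p.2)) :
    Continuous fun x => ∫ y in x..(1:ℝ), f x y := by
  have : (fun x => ∫ y in x..(1:ℝ), f x y) = fun x => -∫ y in (1:ℝ)..x, f x y := by
    ext x; rw [intervalIntegral.integral_symm]
  rw [this]
  exact (intervalIntegral.continuous_parametric_intervalIntegral_of_continuous
    (f := f) hf continuous_id).neg

lemma cont_partial (G : ℝ → ℝ → ℝ) (hG : ContDiff ℝ 1 (fun p : ℝ × ℝ => G p.1 p.2)) :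
    Continuous (fun p : ℝ × ℝ => deriv (fun t => G t p.2) p.1) := by
  have h : ∀ p : ℝ × ℝ, deriv (fun t => G t p.2) p.1
      = fderiv ℝ (fun p : ℝ × ℝ => G p.1 p.2) p (1, 0) := by
    intro p
    have h1 : HasDerivAt (fun t : ℝ => (t, p.2)) ((1:ℝ), (0:ℝ)) p.1 :=
      (hasDerivAt_id _).prodMk (hasDerivAt_const _ _)
    have h2 := ((hG.differentiable one_ne_zero) p).hasFDerivAt
    exact (HasFDerivAt.comp_hasDerivAt (f := fun t : ℝ => (t, p.2)) p.1 h2 h1).deriv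
  simp only [h]
  exact (hG.continuous_fderiv one_ne_zero).clm_apply continuous_const

lemma parts (G : ℝ → ℝ → ℝ) (hG : ContDiff ℝ 1 (fun p : ℝ × ℝ => G p.1 p.2))
    (w : ℝ → ℝ) (hw : ContDiff ℝ 1 w) (a c y : ℝ) :
    (∫ x in a..c, deriv w x * G x y * w y)
      = w c * G c y * w y - w a * G a y * w y
        - ∫ x in a..c, w x * deriv (fun t => G t y) x * w y := by
  have hg : ContDiff ℝ 1 (fun t => G t y) :=
    hG.comp (contDiff_id.prodMk contDiff_const)
  have hd : Continuous (fun t => deriv (fun t => G t y) t) := hg.continuous_deriv le_rfl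
  have hwd := hw.continuous_deriv le_rfl
  have := intervalIntegral.integral_mul_deriv_eq_deriv_mul (a := a) (b := c)
    (u := fun t => G t y) (v := w) (u' := deriv (fun t => G t y)) (v' := deriv w)
    (fun x _ => (hg.differentiable one_ne_zero x).hasDerivAt)
    (fun x _ => (hw.differentiable one_ne_zero x).hasDerivAt)
    (hd.intervalIntegrable _ _) (hwd.intervalIntegrable _ _)
  rw [intervalIntegral.integral_mul_const, intervalIntegral.integral_mul_const]
  have e1 : (∫ x in a..c, deriv w x * G x y) = ∫ x in a..c, G x y * deriv w x := by
    simp only [mul_comm]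
  have e2 : (∫ x in a..c, w x * deriv (fun t => G t y) x)
      = ∫ x in a..c, deriv (fun t => G t y) x * w x := by
    simp only [mul_comm]
  rw [e1, e2, this]
  ring

/-- Primal Γ₄ identity from the proof of Lemma 2. -/
theorem primal_gamma4_identity
    (b : ℝ → ℝ) (hb : ContDiff ℝ 1 b)
    (P1 P2 : ℝ → ℝ → ℝ)
    (hP1 : ContDiff ℝ 1 (fun p : ℝ × ℝ => P1 p.1 p.2))
    (hP2 : ContDiff ℝ 1 (fun p : ℝ × ℝ => P2 p.1 p.2))
    (hsym : ∀ x ξ : ℝ, P1 x ξ = P2 ξ x)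
    (w : ℝ → ℝ) (hw : ContDiff ℝ 1 w) :
    (∫ x in (0:ℝ)..1, deriv w x * b x *
        ((∫ ξ in (0:ℝ)..x, P1 x ξ * w ξ) + ∫ ξ in x..(1:ℝ), P2 x ξ * w ξ))
      = -(1/2) * (∫ x in (0:ℝ)..1, ∫ ξ in (0:ℝ)..x,
            w x * (deriv (fun t => b t * P1 t ξ) x
              + deriv (fun s => b s * P1 x s) ξ) * w ξ)
        - (1/2) * (∫ x in (0:ℝ)..1, ∫ ξ in x..(1:ℝ),
            w x * (deriv (fun t => b t * P2 t ξ) x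
              + deriv (fun s => b s * P2 x s) ξ) * w ξ)
        + w 1 * (∫ ξ in (0:ℝ)..1, b 1 * P1 1 ξ * w ξ)
        - w 0 * (∫ ξ in (0:ℝ)..1, b 0 * P2 0 ξ * w ξ) := by

  have hbc := hb.continuous
  have hwc := hw.continuous
  have hwd : Continuous (deriv w) := hw.continuous_deriv le_rfl
  have hG1 : ContDiff ℝ 1 (fun p : ℝ × ℝ => b p.1 * P1 p.1 p.2) :=
    (hb.comp contDiff_fst).mul hP1
  have hG2 : ContDiff ℝ 1 (fun p : ℝ × ℝ => b p.1 * P2 p.1 p.2) :=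
    (hb.comp contDiff_fst).mul hP2
  have hG1c := hG1.continuous
  have hG2c := hG2.continuous
  have hA1 := cont_partial (fun t y => b t * P1 t y) hG1
  have hA2 := cont_partial (fun t y => b t * P2 t y) hG2
  have pa1 := parts (fun t y => b t * P1 t y) hG1 w hw
  have pa2 := parts (fun t y => b t * P2 t y) hG2 w hw
  have r1 : ∀ x ξ : ℝ, deriv (fun s => b s * P1 x s) ξ = deriv (fun t => b t * P2 t x) ξ := by
    intro x ξ; simp only [hsym]
  have r2 : ∀ x ξ : ℝ, deriv (fun s => b s * P2 x s) ξ = deriv (fun t => b t * P1 t x) ξ := by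
    intro x ξ; simp only [hsym]
  simp only [r1, r2]
  obtain ⟨A1, hA1e⟩ : ∃ A : ℝ → ℝ → ℝ, ∀ x y, deriv (fun t => b t * P1 t y) x = A x y :=
    ⟨_, fun _ _ => rfl⟩
  obtain ⟨A2, hA2e⟩ : ∃ A : ℝ → ℝ → ℝ, ∀ x y, deriv (fun t => b t * P2 t y) x = A x y :=
    ⟨_, fun _ _ => rfl⟩
  obtain ⟨G1, hG1e⟩ : ∃ A : ℝ → ℝ → ℝ, ∀ x y, b x * P1 x y = A x y := ⟨_, fun _ _ => rfl⟩
  obtain ⟨G2, hG2e⟩ : ∃ A : ℝ → ℝ → ℝ, ∀ x y, b x * P2 x y = A x y := ⟨_, fun _ _ => rfl⟩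
  have hdiag : ∀ x, G1 x x = G2 x x := fun x => by rw [← hG1e, ← hG2e, hsym]
  simp only [hA1e] at hA1 pa1 ⊢
  simp only [hA2e] at hA2 pa2 ⊢
  simp only [hG1e] at hG1c pa1 ⊢
  simp only [hG2e] at hG2c pa2 ⊢
  have c1 : Continuous (fun p : ℝ × ℝ => deriv w p.1 * G1 p.1 p.2 * w p.2) := by fun_prop
  have c2 : Continuous (fun p : ℝ × ℝ => deriv w p.1 * G2 p.1 p.2 * w p.2) := by fun_prop
  have d1 : Continuous (fun p : ℝ × ℝ => w p.1 * A1 p.1 p.2 * w p.2) := by fun_prop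
  have d2 : Continuous (fun p : ℝ × ℝ => w p.1 * A2 p.1 p.2 * w p.2) := by fun_prop
  have d1s : Continuous (fun p : ℝ × ℝ => w p.2 * A1 p.2 p.1 * w p.1) := d1.comp continuous_swap
  have d2s : Continuous (fun p : ℝ × ℝ => w p.2 * A2 p.2 p.1 * w p.1) := d2.comp continuous_swap
  have c2s : Continuous (fun p : ℝ × ℝ => deriv w p.2 * G2 p.2 p.1 * w p.1) :=
    c2.comp continuous_swap
  have s1 := tri_swap (fun x y => w x * A1 x y * w y) d1
  have s2 := tri_swap (fun y x => w x * A2 x y * w y) d2s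
  have l1 := tri_swap (fun x y => deriv w x * G1 x y * w y) c1
  have l2 := tri_swap (fun y x => deriv w x * G2 x y * w y) c2s
  have g1 : Continuous fun y => G1 1 y := hG1c.comp (continuous_const.prodMk continuous_id)
  have g2 : Continuous fun y => G2 0 y := hG2c.comp (continuous_const.prodMk continuous_id)
  have gd : Continuous fun y => G2 y y := hG2c.comp (continuous_id.prodMk continuous_id)
  have iD : IntervalIntegrable (fun y => w y * G2 y y * w y) volume 0 1 :=
    ((hwc.mul gd).mul hwc).intervalIntegrable _ _
  have iB1 : IntervalIntegrable (fun y => w 1 * G1 1 y * w y) volume 0 1 :=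
    ((continuous_const.mul g1).mul hwc).intervalIntegrable _ _
  have iB2 : IntervalIntegrable (fun y => w 0 * G2 0 y * w y) volume 0 1 :=
    ((continuous_const.mul g2).mul hwc).intervalIntegrable _ _
  -- left-hand side
  have L : (∫ x in (0:ℝ)..1, deriv w x * b x *
        ((∫ ξ in (0:ℝ)..x, P1 x ξ * w ξ) + ∫ ξ in x..(1:ℝ), P2 x ξ * w ξ))
      = (∫ x in (0:ℝ)..1, ∫ y in (0:ℝ)..x, deriv w x * G1 x y * w y)
        + ∫ x in (0:ℝ)..1, ∫ y in x..(1:ℝ), deriv w x * G2 x y * w y := by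
    rw [← intervalIntegral.integral_add ((cont_lower _ c1).intervalIntegrable _ _)
      ((cont_upper _ c2).intervalIntegrable _ _)]
    refine intervalIntegral.integral_congr fun x _ => ?_
    simp only [← hG1e, ← hG2e, mul_add, ← intervalIntegral.integral_const_mul, mul_assoc]
  have M1 : (∫ y in (0:ℝ)..1, ∫ x in y..(1:ℝ), deriv w x * G1 x y * w y)
      = (∫ y in (0:ℝ)..1, w 1 * G1 1 y * w y) - (∫ y in (0:ℝ)..1, w y * G2 y y * w y)
        - ∫ y in (0:ℝ)..1, ∫ x in y..(1:ℝ), w x * A1 x y * w y := by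
    rw [← intervalIntegral.integral_sub iB1 iD, ← intervalIntegral.integral_sub (iB1.sub iD)
      ((cont_upper _ d1s).intervalIntegrable _ _)]
    refine intervalIntegral.integral_congr fun y _ => ?_
    simp only [pa1, hdiag]
  have M2 : (∫ y in (0:ℝ)..1, ∫ x in (0:ℝ)..y, deriv w x * G2 x y * w y)
      = (∫ y in (0:ℝ)..1, w y * G2 y y * w y) - (∫ y in (0:ℝ)..1, w 0 * G2 0 y * w y)
        - ∫ y in (0:ℝ)..1, ∫ x in (0:ℝ)..y, w x * A2 x y * w y := by
    rw [← intervalIntegral.integral_sub iD iB2, ← intervalIntegral.integral_sub (iD.sub iB2)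
      ((cont_lower _ d2s).intervalIntegrable _ _)]
    refine intervalIntegral.integral_congr fun y _ => ?_
    simp only [pa2]
  have R1 : (∫ x in (0:ℝ)..1, ∫ ξ in (0:ℝ)..x, w x * (A1 x ξ + A2 ξ x) * w ξ)
      = (∫ x in (0:ℝ)..1, ∫ ξ in (0:ℝ)..x, w x * A1 x ξ * w ξ)
        + ∫ x in (0:ℝ)..1, ∫ ξ in (0:ℝ)..x, w ξ * A2 ξ x * w x := by
    rw [← intervalIntegral.integral_add ((cont_lower _ d1).intervalIntegrable _ _)
      ((cont_lower _ d2s).intervalIntegrable _ _)]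
    refine intervalIntegral.integral_congr fun x _ => ?_
    have q1 : Continuous (fun y => w x * A1 x y * w y) :=
      d1.comp (continuous_const.prodMk continuous_id)
    have q2 : Continuous (fun y => w y * A2 y x * w x) :=
      d2s.comp (continuous_const.prodMk continuous_id)
    rw [← intervalIntegral.integral_add (q1.intervalIntegrable _ _) (q2.intervalIntegrable _ _)]
    refine intervalIntegral.integral_congr fun y _ => ?_
    ring_nf
  have R2 : (∫ x in (0:ℝ)..1, ∫ ξ in x..(1:ℝ), w x * (A2 x ξ + A1 ξ x) * w ξ)
      = (∫ x in (0:ℝ)..1, ∫ ξ in x..(1:ℝ), w x * A2 x ξ * w ξ)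
        + ∫ x in (0:ℝ)..1, ∫ ξ in x..(1:ℝ), w ξ * A1 ξ x * w x := by
    rw [← intervalIntegral.integral_add ((cont_upper _ d2).intervalIntegrable _ _)
      ((cont_upper _ d1s).intervalIntegrable _ _)]
    refine intervalIntegral.integral_congr fun x _ => ?_
    have q1 : Continuous (fun y => w x * A2 x y * w y) :=
      d2.comp (continuous_const.prodMk continuous_id)
    have q2 : Continuous (fun y => w y * A1 y x * w x) :=
      d1s.comp (continuous_const.prodMk continuous_id)
    rw [← intervalIntegral.integral_add (q1.intervalIntegrable _ _) (q2.intervalIntegrable _ _)]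
    refine intervalIntegral.integral_congr fun y _ => ?_
    ring_nf
  have B1 : (∫ y in (0:ℝ)..1, w 1 * G1 1 y * w y) = w 1 * ∫ y in (0:ℝ)..1, G1 1 y * w y := by
    simp only [mul_assoc, intervalIntegral.integral_const_mul]
  have B2 : (∫ y in (0:ℝ)..1, w 0 * G2 0 y * w y) = w 0 * ∫ y in (0:ℝ)..1, G2 0 y * w y := by
    simp only [mul_assoc, intervalIntegral.integral_const_mul]
  rw [L, R1, R2, ← B1, ← B2]
  linarith
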